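/- For every real A ≥ 0 and every ε with 0 < ε < 1 there exist a smooth time-dependent function F : ℝ × ℂ → ℝ with F t z = 0 whenever π|z|² ≥ 1 + A + ε, and a Hamiltonian flow b : ℝ → ℂ → ℂ of F with b 0 = id, such that the time-one map b 1 carries the closed disc {z ∈ ℂ : π|z|² ≤ 1} into the open annulus {z ∈ ℂ : A < π|z|² < 1 + A + ε}. -/

import Mathlib

open Real

/-!
A diffeomorphism of the line lifts to `T*ℝ = ℂ`, and the lift of an isotopy is a Hamiltonian flow.
Write `π r² = a`, `π s² = A`, `π ρ² = B`, and choose `R < ρ` with `r² + s² < R²`. A line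
`re z = c` cuts the disc of radius `R` into a left part of area more than `π r²` and a right part of
area more than `π s²`. If `Q` and `P` are primitives of smooth functions slightly above the profiles
`√(r² - x²)` and `√(R² - x²)`, then the isotopy `g` with `P ∘ g t` interpolating linearly between
`P` and `Q` lifts to a flow that keeps the disc of radius `r` inside the disc of radius `ρ`
and, by the comparison of areas, ends with it in `re z < c`. Likewise the disc of radius `s` can be
pushed into `re z < -c`.

Run the first flow, then the second one conjugated by `z ↦ -z` and backwards in time. A point of the
disc of radius `r` ending in the disc of radius `s` would be at half-time both in `re z < c` and in
`re z > c`; hence the image of the first disc avoids the second.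
-/

open Set Metric Filter Topology
open scoped NNReal ContDiff

section IntegralCurves

variable {E : Type*} [NormedAddCommGroup E] [NormedSpace ℝ E] {v w : ℝ → E → E} {K : ℝ≥0}

theorem eqOn_ball_of_isIntegralCurveOn {γ γ' : ℝ → E} {t₀ r : ℝ} (hv : ∀ t, LipschitzWith K (v t))
    (hγ : IsIntegralCurveOn γ v (ball t₀ r)) (hγ' : IsIntegralCurveOn γ' v (ball t₀ r))
    (h : γ t₀ = γ' t₀) : EqOn γ γ' (ball t₀ r) := by
  rcases le_or_gt r 0 with hr | hr
  · simp only [ball_eq_empty.2 hr, eqOn_empty]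
  have hasDerivAt {α : ℝ → E} (hα : IsIntegralCurveOn α v (ball t₀ r)) (t : ℝ)
      (ht : t ∈ ball t₀ r) : HasDerivAt α (v t (α t)) t ∧ α t ∈ univ :=
    ⟨(hα t ht).hasDerivAt (isOpen_ball.mem_nhds ht), mem_univ _⟩
  have h₀ := mem_ball_self (x := t₀) hr
  rw [Real.ball_eq_Ioo] at *
  exact ODE_solution_unique_of_mem_Ioo (fun t _ ↦ (hv t).lipschitzOnWith) h₀ (hasDerivAt hγ)
    (hasDerivAt hγ') h

theorem exists_isIntegralCurve_of_forall_ball {t₀ : ℝ} {x : E} (hv : ∀ t, LipschitzWith K (v t))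
    (h : ∀ r, ∃ γ, γ t₀ = x ∧ IsIntegralCurveOn γ v (ball t₀ r)) :
    ∃ γ, γ t₀ = x ∧ IsIntegralCurve γ v := by
  choose γ hγ₀ hγ using h
  have agree {r t : ℝ} (ht : t ∈ ball t₀ r) : γ (dist t t₀ + 1) t = γ r t := by
    have hmin : t ∈ ball t₀ (min (dist t t₀ + 1) r) :=
      mem_ball.2 (lt_min (lt_add_one _) ht)
    exact eqOn_ball_of_isIntegralCurveOn hv
      ((hγ _).mono (ball_subset_ball (min_le_left _ _)))
      ((hγ _).mono (ball_subset_ball (min_le_right _ _))) (by rw [hγ₀, hγ₀]) hmin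
  refine ⟨fun t ↦ γ (dist t t₀ + 1) t, hγ₀ _, fun t ↦ ?_⟩
  have hball : ball t₀ (dist t t₀ + 1) ∈ 𝓝 t := isOpen_ball.mem_nhds (mem_ball.2 (lt_add_one _))
  refine ((hγ _ t (mem_of_mem_nhds hball)).hasDerivAt hball).congr_of_eventuallyEq ?_
  filter_upwards [hball] with s hs using agree hs

theorem exists_isIntegralCurve_of_lipschitzWith_of_bounded [CompleteSpace E] {L : ℝ≥0}
    (hv : ∀ t, LipschitzWith K (v t)) (hcont : ∀ x, Continuous (v · x))
    (hL : ∀ t x, ‖v t x‖ ≤ L) (t₀ : ℝ) (x : E) : ∃ γ, γ t₀ = x ∧ IsIntegralCurve γ v := by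
  refine exists_isIntegralCurve_of_forall_ball hv fun r ↦ ?_
  have hPL : IsPicardLindelof v (tmin := t₀ - |r|) (tmax := t₀ + |r|) ⟨t₀, by simp⟩ x
      (L * ‖r‖₊) 0 L K :=
    { lipschitzOnWith t _ := (hv t).lipschitzOnWith
      continuousOn x _ := (hcont x).continuousOn
      norm_le t _ x _ := hL t x
      mul_max_le := by simp }
  obtain ⟨γ, hγ₀, hγ⟩ := hPL.exists_eq_forall_mem_Icc_hasDerivWithinAt₀
  refine ⟨γ, hγ₀, IsIntegralCurveOn.mono hγ ?_⟩
  rw [← Real.closedBall_eq_Icc]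
  exact ball_subset_closedBall.trans (closedBall_subset_closedBall (le_abs_self r))

theorem eq_of_isIntegralCurve_of_field_eq_zero {γ : ℝ → E} {s : Set ℝ} (hγ : IsIntegralCurve γ v)
    (hs : Convex ℝ s) (hv : ∀ t ∈ s, ∀ x, v t x = 0) {t₀ t : ℝ} (ht₀ : t₀ ∈ s) (ht : t ∈ s) :
    γ t = γ t₀ := by
  have h := hs.norm_image_sub_le_of_norm_hasDerivWithin_le (C := 0)
    (fun t _ ↦ (hγ t).hasDerivWithinAt) (fun t ht ↦ by rw [hv t ht, norm_zero]) ht₀ ht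
  rwa [zero_mul, norm_le_zero_iff, sub_eq_zero] at h

/-- `Transports v x y` says that some integral curve of the time-dependent vector field `v` passes
through `x` at time `0` and through `y` at time `1`: when `v` has a flow, its time-one map sends `x`
to `y`. -/
def Transports (v : ℝ → E → E) (x y : E) : Prop :=
  ∃ γ, γ 0 = x ∧ γ 1 = y ∧ IsIntegralCurve γ v

namespace Transports

variable {x y z : E}

theorem of_isIntegralCurve {γ : ℝ → E} (hγ : IsIntegralCurve γ v) : Transports v (γ 0) (γ 1) :=
  ⟨γ, rfl, rfl, hγ⟩

theorem of_field_eq_zero (h : ∀ t, v t x = 0) : Transports v x x :=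
  of_isIntegralCurve (isIntegralCurve_const h)

theorem left_unique (hv : ∀ t, LipschitzWith K (v t)) (hx : Transports v x z)
    (hy : Transports v y z) : x = y := by
  obtain ⟨γ, rfl, hγ₁, hγ⟩ := hx
  obtain ⟨γ', rfl, rfl, hγ'⟩ := hy
  exact congrFun (ODE_solution_unique_univ (fun t ↦ (hv t).lipschitzOnWith (s := univ))
    (fun t ↦ ⟨hγ t, mem_univ _⟩) (fun t ↦ ⟨hγ' t, mem_univ _⟩) hγ₁) 0

theorem reverse (h : Transports v x y) : Transports (fun t x ↦ -v (1 - t) x) y x := by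
  obtain ⟨γ, rfl, rfl, hγ⟩ := h
  refine ⟨fun t ↦ γ (1 - t), by simp, by simp, fun t ↦ ?_⟩
  exact (hγ (1 - t)).comp_const_sub 1 t

theorem right_unique (hv : ∀ t, LipschitzWith K (v t)) (hy : Transports v x y)
    (hz : Transports v x z) : y = z :=
  hy.reverse.left_unique (fun t ↦ (hv (1 - t)).neg) hz.reverse

theorem reflect (h : Transports v x y) : Transports (fun t x ↦ -v t (-x)) (-x) (-y) := by
  obtain ⟨γ, rfl, rfl, hγ⟩ := h
  refine ⟨fun t ↦ -γ t, rfl, rfl, fun t ↦ ?_⟩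
  simpa only [neg_neg] using (hγ t).fun_neg

theorem concat (hv : ∀ t, 1 ≤ t → ∀ x, v t x = 0) (hw : ∀ t ≤ 0, ∀ x, w t x = 0)
    (hxy : Transports v x y) (hyz : Transports w y z) :
    Transports (fun t x ↦ (2 : ℝ) • v (2 * t) x + (2 : ℝ) • w (2 * t - 1) x) x z := by
  obtain ⟨γ, rfl, rfl, hγ⟩ := hxy
  obtain ⟨β, hβ₀, rfl, hβ⟩ := hyz
  have hγ₁ (t : ℝ) (ht : 1 ≤ t) : γ t = γ 1 :=
    eq_of_isIntegralCurve_of_field_eq_zero hγ (convex_Ici 1) hv self_mem_Ici ht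
  have hβ₁ (t : ℝ) (ht : t ≤ 0) : β t = γ 1 :=
    hβ₀ ▸ eq_of_isIntegralCurve_of_field_eq_zero hβ (convex_Iic 0) hw self_mem_Iic ht
  refine ⟨fun t ↦ γ (2 * t) + β (2 * t - 1) - γ 1, ?_, ?_, fun t ↦ ?_⟩
  · simp [hβ₁]
  · norm_num [hγ₁]
  have hγ' : HasDerivAt (fun t ↦ γ (2 * t)) ((2 : ℝ) • v (2 * t) (γ (2 * t))) t := by
    simpa [Function.comp_def] using (hγ (2 * t)).scomp t ((hasDerivAt_id t).const_mul 2)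
  have hβ' : HasDerivAt (fun t ↦ β (2 * t - 1)) ((2 : ℝ) • w (2 * t - 1) (β (2 * t - 1))) t := by
    simpa [Function.comp_def] using
      (hβ (2 * t - 1)).scomp t (((hasDerivAt_id t).const_mul 2).sub_const 1)
  convert! (hγ'.add hβ').sub_const (γ 1) using 1
  rcases le_total (2 * t) 1 with ht | ht
  · have ht' : 2 * t - 1 ≤ 0 := by linarith
    simp only [hβ₁ _ ht', hw _ ht', add_sub_cancel_right]
  · simp only [hγ₁ _ ht, hv _ ht, add_sub_cancel_left]

end Transports

end IntegralCurves

section Hamiltonians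

open Function

/-- The Hamiltonian vector field of a time-dependent function on `ℂ`, for the symplectic form
`dx ∧ dy`. -/
noncomputable def hamiltonianVectorField (F : ℝ × ℂ → ℝ) (t : ℝ) (z : ℂ) : ℂ :=
  Complex.I * gradient (fun w ↦ F (t, w)) z

/-- `IsHamiltonianIn ρ F` says that `F` is a smooth time-dependent Hamiltonian on `ℂ` supported in
a smaller concentric disc inside the open disc of radius `ρ`, at times strictly between `0` and
`1`. -/
structure IsHamiltonianIn (ρ : ℝ) (F : ℝ × ℂ → ℝ) : Prop where
  contDiff : ContDiff ℝ ∞ F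
  support_subset : ∃ r < ρ, support F ⊆ Ioo 0 1 ×ˢ ball 0 r

/-- The Hamiltonian running first `F` and then `G`, both at double speed. -/
def concatHamiltonian (F G : ℝ × ℂ → ℝ) (p : ℝ × ℂ) : ℝ :=
  2 * F (2 * p.1, p.2) + 2 * G (2 * p.1 - 1, p.2)

/-- The Hamiltonian running `F` backwards in time. -/
def reverseHamiltonian (F : ℝ × ℂ → ℝ) (p : ℝ × ℂ) : ℝ := -F (1 - p.1, p.2)

/-- The conjugate of the Hamiltonian `F` by the point reflection `z ↦ -z`. -/
def reflectHamiltonian (F : ℝ × ℂ → ℝ) (p : ℝ × ℂ) : ℝ := F (p.1, -p.2)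

variable {F G : ℝ × ℂ → ℝ} {ρ : ℝ}

theorem hamiltonianVectorField_eq_zero {t : ℝ} {z : ℂ} (h : (fun w ↦ F (t, w)) =ᶠ[𝓝 z] 0) :
    hamiltonianVectorField F t z = 0 := by
  simp [hamiltonianVectorField, gradient, h.fderiv_eq]

theorem hamiltonianVectorField_reverseHamiltonian :
    hamiltonianVectorField (reverseHamiltonian F) =
      fun t z ↦ -hamiltonianVectorField F (1 - t) z := by
  ext1 t; ext1 z
  simp [hamiltonianVectorField, reverseHamiltonian, gradient]

theorem hamiltonianVectorField_reflectHamiltonian :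
    hamiltonianVectorField (reflectHamiltonian F) =
      fun t z ↦ -hamiltonianVectorField F t (-z) := by
  ext1 t; ext1 z
  have h := fderiv_comp_smul (f := fun w ↦ F (t, w)) (x := z) (-1 : ℝ)
  simp only [neg_one_smul] at h
  simp [hamiltonianVectorField, reflectHamiltonian, gradient, h]

theorem hamiltonianVectorField_concatHamiltonian (hF : Differentiable ℝ F)
    (hG : Differentiable ℝ G) :
    hamiltonianVectorField (concatHamiltonian F G) =
      fun t z ↦ (2 : ℝ) • hamiltonianVectorField F (2 * t) z +
        (2 : ℝ) • hamiltonianVectorField G (2 * t - 1) z := by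
  ext1 t; ext1 z
  have hF' : DifferentiableAt ℝ (fun w ↦ F (2 * t, w)) z := by fun_prop
  have hG' : DifferentiableAt ℝ (fun w ↦ G (2 * t - 1, w)) z := by fun_prop
  simp only [hamiltonianVectorField, gradient, concatHamiltonian]
  rw [fderiv_fun_add (hF'.const_mul 2) (hG'.const_mul 2), fderiv_const_mul hF',
    fderiv_const_mul hG', map_add, map_smulₛₗ, map_smulₛₗ, mul_add, mul_smul_comm, mul_smul_comm]
  rfl

theorem hamiltonianVectorField_eq_fderiv {t : ℝ} {z : ℂ} (hF : DifferentiableAt ℝ F (t, z)) :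
    hamiltonianVectorField F t z =
      Complex.I * (InnerProductSpace.toDual ℝ ℂ).symm (fderiv ℝ F (t, z) ∘L .inr ℝ ℝ ℂ) := by
  have h := hF.hasFDerivAt.comp z (hasFDerivAt_prodMk_right t z)
  rw [hamiltonianVectorField, gradient, ← h.fderiv, comp_def]

namespace IsHamiltonianIn

theorem apply_eq_zero (hF : IsHamiltonianIn ρ F) {t : ℝ} {z : ℂ} (hz : ρ ≤ ‖z‖) :
    F (t, z) = 0 := by
  obtain ⟨r, hr, hsupp⟩ := hF.support_subset
  refine notMem_support.1 fun h ↦ ?_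
  linarith [mem_ball_zero_iff.1 (hsupp h).2]

theorem field_eq_zero_of_le_norm (hF : IsHamiltonianIn ρ F) (t : ℝ) {z : ℂ} (hz : ρ ≤ ‖z‖) :
    hamiltonianVectorField F t z = 0 := by
  obtain ⟨r, hr, hsupp⟩ := hF.support_subset
  refine hamiltonianVectorField_eq_zero ?_
  filter_upwards [isClosed_closedBall.isOpen_compl.mem_nhds
    (show z ∈ (closedBall 0 r)ᶜ by simpa using hr.trans_le hz)] with w hw
  exact notMem_support.1 fun h ↦ hw (ball_subset_closedBall (hsupp h).2)

theorem field_eq_zero_of_notMem (hF : IsHamiltonianIn ρ F) {t : ℝ} (ht : t ∉ Ioo 0 1) (z : ℂ) :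
    hamiltonianVectorField F t z = 0 := by
  obtain ⟨r, -, hsupp⟩ := hF.support_subset
  exact hamiltonianVectorField_eq_zero
    (.of_forall fun w ↦ notMem_support.1 fun h ↦ ht (hsupp h).1)

theorem contDiff_field (hF : IsHamiltonianIn ρ F) :
    ContDiff ℝ ∞ (uncurry (hamiltonianVectorField F)) := by
  have h (p : ℝ × ℂ) := hamiltonianVectorField_eq_fderiv (hF.contDiff.differentiable (by simp) p)
  rw [show uncurry (hamiltonianVectorField F) = _ from funext h]
  have hF' : ContDiff ℝ ∞ (fderiv ℝ F) := hF.contDiff.fderiv_right (by simp)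
  exact contDiff_const.mul ((InnerProductSpace.toDual ℝ ℂ).symm.contDiff.comp
    (hF'.clm_comp contDiff_const))

theorem hasCompactSupport_field (hF : IsHamiltonianIn ρ F) :
    HasCompactSupport (uncurry (hamiltonianVectorField F)) := by
  refine .of_support_subset_isCompact
    ((isCompact_Icc (a := (0 : ℝ)) (b := 1)).prod (isCompact_closedBall (0 : ℂ) ρ)) ?_
  rintro ⟨t, z⟩ hX
  constructor
  · by_contra ht
    exact hX (hF.field_eq_zero_of_notMem (fun h ↦ ht (Ioo_subset_Icc_self h)) z)
  · by_contra hz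
    rw [mem_closedBall_zero_iff, not_le] at hz
    exact hX (hF.field_eq_zero_of_le_norm t hz.le)

theorem exists_lipschitzWith_field (hF : IsHamiltonianIn ρ F) :
    ∃ K, ∀ t, LipschitzWith K (hamiltonianVectorField F t) := by
  obtain ⟨K, hK⟩ :=
    hF.contDiff_field.lipschitzWith_of_hasCompactSupport hF.hasCompactSupport_field (by simp)
  exact ⟨K, fun t ↦ by simpa [comp_def] using hK.comp (LipschitzWith.prodMk_left t)⟩

theorem exists_flow (hF : IsHamiltonianIn ρ F) :
    ∃ b : ℝ → ℂ → ℂ, b 0 = id ∧ ∀ z, IsIntegralCurve (b · z) (hamiltonianVectorField F) := by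
  obtain ⟨K, hK⟩ := hF.exists_lipschitzWith_field
  have hcont := hF.contDiff_field.continuous
  obtain ⟨L, hL⟩ := hF.hasCompactSupport_field.exists_bound_of_continuous hcont
  choose b hb₀ hb using exists_isIntegralCurve_of_lipschitzWith_of_bounded hK
    (fun z ↦ hcont.comp (.prodMk_left z))
    (fun t z ↦ (hL (t, z)).trans L.le_coe_toNNReal) 0
  exact ⟨fun t z ↦ b z t, funext hb₀, hb⟩

theorem exists_transports (hF : IsHamiltonianIn ρ F) (z : ℂ) :
    ∃ w, Transports (hamiltonianVectorField F) z w := by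
  obtain ⟨b, hb₀, hb⟩ := hF.exists_flow
  exact ⟨b 1 z, by simpa [hb₀] using Transports.of_isIntegralCurve (hb z)⟩

theorem transports_self (hF : IsHamiltonianIn ρ F) {z : ℂ} (hz : ρ ≤ ‖z‖) :
    Transports (hamiltonianVectorField F) z z :=
  .of_field_eq_zero fun t ↦ hF.field_eq_zero_of_le_norm t hz

theorem norm_lt_of_transports (hF : IsHamiltonianIn ρ F) {z w : ℂ} (hz : ‖z‖ < ρ)
    (h : Transports (hamiltonianVectorField F) z w) : ‖w‖ < ρ := by
  obtain ⟨K, hK⟩ := hF.exists_lipschitzWith_field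
  by_contra! hw
  exact hz.not_ge (h.left_unique hK (hF.transports_self hw) ▸ hw)

theorem reverse (hF : IsHamiltonianIn ρ F) : IsHamiltonianIn ρ (reverseHamiltonian F) := by
  obtain ⟨r, hr, hsupp⟩ := hF.support_subset
  refine ⟨?_, r, hr, fun p hp ↦ ?_⟩
  · exact (hF.contDiff.comp (by fun_prop : ContDiff ℝ ∞ fun p : ℝ × ℂ ↦ (1 - p.1, p.2))).neg
  · have h := hsupp (neg_ne_zero.1 hp)
    simp only [mem_prod, mem_Ioo] at h ⊢
    exact ⟨⟨by linarith, by linarith⟩, h.2⟩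

theorem reflect (hF : IsHamiltonianIn ρ F) : IsHamiltonianIn ρ (reflectHamiltonian F) := by
  obtain ⟨r, hr, hsupp⟩ := hF.support_subset
  refine ⟨?_, r, hr, fun p hp ↦ ?_⟩
  · exact hF.contDiff.comp (by fun_prop : ContDiff ℝ ∞ fun p : ℝ × ℂ ↦ (p.1, -p.2))
  · simpa using hsupp hp

theorem concat (hF : IsHamiltonianIn ρ F) (hG : IsHamiltonianIn ρ G) :
    IsHamiltonianIn ρ (concatHamiltonian F G) := by
  obtain ⟨r, hr, hFsupp⟩ := hF.support_subset
  obtain ⟨s, hs, hGsupp⟩ := hG.support_subset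
  refine ⟨?_, max r s, max_lt hr hs, fun p hp ↦ ?_⟩
  · have := hF.contDiff
    have := hG.contDiff
    unfold concatHamiltonian
    fun_prop
  · have h : F (2 * p.1, p.2) ≠ 0 ∨ G (2 * p.1 - 1, p.2) ≠ 0 := by
      by_contra! h
      exact hp (by simp [concatHamiltonian, h])
    rcases h with h | h
    · obtain ⟨⟨h₀, h₁⟩, hr⟩ := hFsupp h
      exact ⟨⟨by linarith, by linarith⟩, ball_subset_ball (le_max_left r s) hr⟩
    · obtain ⟨⟨h₀, h₁⟩, hs⟩ := hGsupp h
      exact ⟨⟨by linarith, by linarith⟩, ball_subset_ball (le_max_right r s) hs⟩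

theorem transports_concat (hF : IsHamiltonianIn ρ F) (hG : IsHamiltonianIn ρ G) {x y z : ℂ}
    (hxy : Transports (hamiltonianVectorField F) x y)
    (hyz : Transports (hamiltonianVectorField G) y z) :
    Transports (hamiltonianVectorField (concatHamiltonian F G)) x z := by
  rw [hamiltonianVectorField_concatHamiltonian (hF.contDiff.differentiable (by simp))
    (hG.contDiff.differentiable (by simp))]
  exact hxy.concat (fun t ht ↦ hF.field_eq_zero_of_notMem fun h ↦ h.2.not_ge ht)
    (fun t ht ↦ hG.field_eq_zero_of_notMem fun h ↦ h.1.not_ge ht) hyz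

theorem transports_of_transports_concat (hF : IsHamiltonianIn ρ F) (hG : IsHamiltonianIn ρ G)
    {x y z : ℂ} (hxy : Transports (hamiltonianVectorField F) x y)
    (hxz : Transports (hamiltonianVectorField (concatHamiltonian F G)) x z) :
    Transports (hamiltonianVectorField G) y z := by
  obtain ⟨w, hyw⟩ := hG.exists_transports y
  obtain ⟨K, hK⟩ := (hF.concat hG).exists_lipschitzWith_field
  rwa [hxz.right_unique hK (hF.transports_concat hG hxy hyw)]

end IsHamiltonianIn

end Hamiltonians

section PartialDerivatives

variable {E F : Type*} [NormedAddCommGroup E] [NormedSpace ℝ E] [NormedAddCommGroup F]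
  [NormedSpace ℝ F]

theorem hasDerivAt_fderiv_prodMk_left {f : ℝ × E → F} (hf : Differentiable ℝ f) (t : ℝ) (x : E) :
    HasDerivAt (fun s ↦ f (s, x)) (fderiv ℝ f (t, x) (1, 0)) t :=
  (hf (t, x)).hasFDerivAt.comp_hasDerivAt t ((hasDerivAt_id t).prodMk (hasDerivAt_const t x))

theorem hasDerivAt_fderiv_prodMk_right {f : E × ℝ → F} (hf : Differentiable ℝ f) (p : E) (x : ℝ) :
    HasDerivAt (fun y ↦ f (p, y)) (fderiv ℝ f (p, x) (0, 1)) x :=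
  (hf (p, x)).hasFDerivAt.comp_hasDerivAt x ((hasDerivAt_const x p).prodMk (hasDerivAt_id x))

theorem fderiv_fderiv_apply_comm {f : E → F} (hf : ContDiff ℝ 2 f) (x v w : E) :
    fderiv ℝ (fun y ↦ fderiv ℝ f y v) x w = fderiv ℝ (fun y ↦ fderiv ℝ f y w) x v := by
  have h : DifferentiableAt ℝ (fderiv ℝ f) x :=
    (hf.fderiv_right (m := 1) (by norm_num)).differentiable (by simp) x
  have hsymm : IsSymmSndFDerivAt ℝ f x :=
    hf.contDiffAt.isSymmSndFDerivAt (by simp [minSmoothness_of_isRCLikeNormedField])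
  simpa [fderiv_clm_apply h] using hsymm.eq w v

variable [CompleteSpace E]

theorem contDiff_of_fiberwise_inverse {M N : E × ℝ → ℝ} {n : WithTop ℕ∞} (hM : ContDiff ℝ n M)
    (hn : n ≠ 0) (hM' : ∀ p x, deriv (fun y ↦ M (p, y)) x ≠ 0) (hMN : ∀ p u, M (p, N (p, u)) = u)
    (hNM : ∀ p x, N (p, M (p, x)) = x) : ContDiff ℝ n N := by
  refine contDiff_iff_contDiffAt.2 fun ⟨p, u⟩ ↦ ?_
  let f : (E × ℝ) × ℝ → ℝ := fun a ↦ M (a.1.1, a.2) - a.1.2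
  have hf : ContDiff ℝ n f := by fun_prop
  have hf' : fderiv ℝ f ((p, u), N (p, u)) ∘L .inr ℝ (E × ℝ) ℝ =
      fderiv ℝ (fun y ↦ M (p, y)) (N (p, u)) := by
    have h := (hf.differentiable hn ((p, u), N (p, u))).hasFDerivAt.comp (N (p, u))
      (hasFDerivAt_prodMk_right (p, u) (N (p, u)))
    rw [← h.fderiv]
    exact fderiv_sub_const u
  have hinv : (fderiv ℝ f ((p, u), N (p, u)) ∘L .inr ℝ (E × ℝ) ℝ).IsInvertible := by
    rw [hf']
    refine ⟨.unitsEquivAut ℝ (.mk0 _ (hM' p (N (p, u)))), ?_⟩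
    ext
    simp
  have hψ := hf.contDiffAt.contDiffAt_implicitFunction hn hinv
  refine hψ.congr_of_eventuallyEq ?_
  filter_upwards [hf.contDiffAt.eventually_apply_implicitFunction hn hinv] with a ha
  rw [← hNM a.1 (hf.contDiffAt.implicitFunction hn hinv a)]
  simp only [f, hMN, sub_self, sub_eq_zero] at ha
  rw [ha]

theorem exists_contDiff_fiberwise_inverse {M : E × ℝ → ℝ} {n : WithTop ℕ∞} {δ : ℝ}
    (hM : ContDiff ℝ n M) (hn : n ≠ 0) (hδ : 0 < δ)
    (hM' : ∀ p x, δ ≤ deriv (fun y ↦ M (p, y)) x) :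
    ∃ N : E × ℝ → ℝ, ContDiff ℝ n N ∧ (∀ p u, M (p, N (p, u)) = u) ∧
      ∀ p x, N (p, M (p, x)) = x := by
  have hpos p x : 0 < deriv (fun y ↦ M (p, y)) x := hδ.trans_le (hM' p x)
  have hinj p : Function.Injective fun y ↦ M (p, y) := (strictMono_of_deriv_pos (hpos p)).injective
  have hsurj p : Function.Surjective fun y ↦ M (p, y) := by
    have hcont : Continuous fun y ↦ M (p, y) := hM.continuous.comp (.prodMk_right p)
    have hgrow {x y : ℝ} (hxy : x ≤ y) : δ * (y - x) ≤ M (p, y) - M (p, x) :=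
      mul_sub_le_image_sub_of_le_deriv
        (fun x ↦ differentiableAt_of_deriv_ne_zero (hpos p x).ne') (hM' p) hxy
    refine hcont.surjective ?_ ?_
    · refine tendsto_atTop_mono' _ ?_
        (tendsto_atTop_add_const_right _ (M (p, 0)) (tendsto_id.const_mul_atTop hδ))
      filter_upwards [eventually_ge_atTop 0] with y hy
      simp only [id_eq]
      linarith [hgrow hy]
    · refine tendsto_atBot_mono' _ ?_
        (tendsto_atBot_add_const_right _ (M (p, 0)) (tendsto_id.const_mul_atBot hδ))
      filter_upwards [eventually_le_atBot 0] with y hy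
      simp only [id_eq]
      linarith [hgrow hy]
  choose N hN using hsurj
  have hNM p x : N p (M (p, x)) = x := hinj p (hN p _)
  exact ⟨fun a ↦ N a.1 a.2,
    contDiff_of_fiberwise_inverse hM hn (fun p x ↦ (hpos p x).ne') hN hNM, hN, hNM⟩

end PartialDerivatives

/-- A smooth isotopy of the real line: `toFun (t, ·)` is the identity at time `0`, has the left
inverse `invFun (t, ·)`, depending smoothly on `t`, and moves only at times strictly between `0` and
`1`. -/
structure LineIsotopy where
  toFun : ℝ × ℝ → ℝ
  invFun : ℝ × ℝ → ℝ
  contDiff_toFun : ContDiff ℝ ∞ toFun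
  contDiff_invFun : ContDiff ℝ ∞ invFun
  left_inv : ∀ t x, invFun (t, toFun (t, x)) = x
  map_zero : ∀ x, toFun (0, x) = x
  deriv_eq_zero : ∀ t ∉ Ioo (0 : ℝ) 1, ∀ x, deriv (fun s ↦ toFun (s, x)) t = 0

namespace LineIsotopy

variable (g : LineIsotopy)

instance : CoeFun LineIsotopy fun _ ↦ ℝ × ℝ → ℝ := ⟨toFun⟩

/-- The velocity field of a line isotopy. -/
noncomputable def velocity (a : ℝ × ℝ) : ℝ := fderiv ℝ g (a.1, g.invFun a) (1, 0)

/-- The space derivative of a line isotopy. -/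
noncomputable def slope (a : ℝ × ℝ) : ℝ := fderiv ℝ g a (0, 1)

/-- The action of a line isotopy on the cotangent bundle `T*ℝ = ℂ`, with base coordinate `re` and
fibre coordinate `im`. -/
noncomputable def cotangentLift (t : ℝ) (z : ℂ) : ℂ := ⟨g (t, z.re), z.im / g.slope (t, z.re)⟩

/-- The Hamiltonian generating `cotangentLift`. -/
noncomputable def hamiltonian (a : ℝ × ℂ) : ℝ := -(g.velocity (a.1, a.2.re) * a.2.im)

theorem contDiff_fderiv_apply (v : ℝ × ℝ) : ContDiff ℝ ∞ fun a ↦ fderiv ℝ g a v :=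
  (g.contDiff_toFun.fderiv_right (by simp)).clm_apply contDiff_const

theorem contDiff_velocity : ContDiff ℝ ∞ g.velocity :=
  (g.contDiff_fderiv_apply _).comp (contDiff_fst.prodMk g.contDiff_invFun)

theorem hasDerivAt_toFun_left (t x : ℝ) :
    HasDerivAt (fun s ↦ g (s, x)) (g.velocity (t, g (t, x))) t := by
  simpa only [velocity, g.left_inv] using
    hasDerivAt_fderiv_prodMk_left (g.contDiff_toFun.differentiable (by simp)) t x

theorem hasDerivAt_toFun_right (t x : ℝ) : HasDerivAt (fun y ↦ g (t, y)) (g.slope (t, x)) x :=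
  hasDerivAt_fderiv_prodMk_right (g.contDiff_toFun.differentiable (by simp)) t x

theorem hasDerivAt_velocity_right (t w : ℝ) :
    HasDerivAt (fun w ↦ g.velocity (t, w)) (deriv (fun w ↦ g.velocity (t, w)) w) w := by
  have := g.contDiff_velocity
  exact (ContDiff.differentiable (by fun_prop) (by simp : (∞ : WithTop ℕ∞) ≠ 0) w).hasDerivAt

theorem slope_ne_zero (t x : ℝ) : g.slope (t, x) ≠ 0 := by
  have hinv : DifferentiableAt ℝ (fun w ↦ g.invFun (t, w)) (g (t, x)) := by
    have := g.contDiff_invFun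
    exact ContDiff.differentiable (by fun_prop) (by simp : (∞ : WithTop ℕ∞) ≠ 0) _
  have h := hinv.hasDerivAt.comp x (g.hasDerivAt_toFun_right t x)
  have hid : (fun w ↦ g.invFun (t, w)) ∘ (fun y ↦ g (t, y)) = id := funext (g.left_inv t)
  rw [hid] at h
  exact right_ne_zero_of_mul_eq_one (h.unique (hasDerivAt_id x))

theorem hasDerivAt_slope_left (t x : ℝ) :
    HasDerivAt (fun s ↦ g.slope (s, x))
      (deriv (fun w ↦ g.velocity (t, w)) (g (t, x)) * g.slope (t, x)) t := by
  have hv := (g.hasDerivAt_velocity_right t (g (t, x))).comp x (g.hasDerivAt_toFun_right t x)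
  have hv' := hasDerivAt_fderiv_prodMk_right
    ((g.contDiff_fderiv_apply (1, 0)).differentiable (by simp)) t x
  have hvg : (fun w ↦ g.velocity (t, w)) ∘ (fun y ↦ g (t, y)) =
      fun y ↦ fderiv ℝ g (t, y) (1, 0) := by
    ext y
    simp only [Function.comp_apply, velocity, g.left_inv]
  rw [hvg] at hv
  rw [hv.unique hv', fderiv_fderiv_apply_comm (g.contDiff_toFun.of_le (by norm_cast))]
  exact hasDerivAt_fderiv_prodMk_left
    ((g.contDiff_fderiv_apply (0, 1)).differentiable (by simp)) t x

theorem contDiff_hamiltonian : ContDiff ℝ ∞ g.hamiltonian := by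
  have hre : ContDiff ℝ ∞ fun a : ℝ × ℂ ↦ a.2.re := Complex.reCLM.contDiff.comp contDiff_snd
  have him : ContDiff ℝ ∞ fun a : ℝ × ℂ ↦ a.2.im := Complex.imCLM.contDiff.comp contDiff_snd
  exact ((g.contDiff_velocity.comp (contDiff_fst.prodMk hre)).mul him).neg

theorem hamiltonian_eq_zero {t : ℝ} (ht : t ∉ Ioo 0 1) (z : ℂ) : g.hamiltonian (t, z) = 0 := by
  have hderiv : HasDerivAt (fun s ↦ g (s, g.invFun (t, z.re))) (g.velocity (t, z.re)) t :=
    hasDerivAt_fderiv_prodMk_left (g.contDiff_toFun.differentiable (by simp)) t _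
  rw [hamiltonian, ← hderiv.deriv, g.deriv_eq_zero t ht, zero_mul, neg_zero]

theorem hamiltonianVectorField_hamiltonian (t : ℝ) (z : ℂ) :
    hamiltonianVectorField g.hamiltonian t z =
      ⟨g.velocity (t, z.re), -(deriv (fun w ↦ g.velocity (t, w)) z.re * z.im)⟩ := by
  have hre : HasFDerivAt Complex.re Complex.reCLM z := Complex.reCLM.hasFDerivAt
  have him : HasFDerivAt Complex.im Complex.imCLM z := Complex.imCLM.hasFDerivAt
  have h := (((g.hasDerivAt_velocity_right t z.re).comp_hasFDerivAt z hre).mul him).neg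
  have hgrad : HasGradientAt (fun w ↦ g.hamiltonian (t, w))
      ⟨-(deriv (fun w ↦ g.velocity (t, w)) z.re * z.im), -g.velocity (t, z.re)⟩ z := by
    rw [hasGradientAt_iff_hasFDerivAt]
    convert! h using 1
    ext v
    simp [Complex.inner, InnerProductSpace.toDual_apply_apply]
    ring
  rw [hamiltonianVectorField, hgrad.gradient]
  apply Complex.ext <;> simp

theorem cotangentLift_zero (z : ℂ) : g.cotangentLift 0 z = z := by
  have hslope : g.slope (0, z.re) = 1 := by
    have h := g.hasDerivAt_toFun_right 0 z.re
    simp only [g.map_zero] at h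
    exact h.unique (hasDerivAt_id _)
  simp [cotangentLift, g.map_zero, hslope]

theorem isIntegralCurve_cotangentLift (z : ℂ) :
    IsIntegralCurve (g.cotangentLift · z) (hamiltonianVectorField g.hamiltonian) := by
  intro t
  have hre := g.hasDerivAt_toFun_left t z.re
  have him := (hasDerivAt_const t z.im).div (g.hasDerivAt_slope_left t z.re)
    (g.slope_ne_zero t z.re)
  have h := hre.ofReal_comp.add (him.ofReal_comp.mul_const Complex.I)
  rw [hamiltonianVectorField_hamiltonian]
  have hslope := g.slope_ne_zero t z.re
  convert! h using 1
  · ext s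
    exact Complex.mk_eq_add_mul_I _ _
  · rw [Complex.mk_eq_add_mul_I]
    simp only [cotangentLift]
    congr 3
    field_simp
    ring

end LineIsotopy

theorem deriv_smoothTransition_eq_zero {t : ℝ} (ht : t ∉ Ioo (0 : ℝ) 1) :
    deriv smoothTransition t = 0 := by
  rcases le_or_gt t 0 with h₀ | h₀
  · refine IsLocalMin.deriv_eq_zero (.of_forall fun s ↦ ?_)
    rw [smoothTransition.zero_of_nonpos h₀]
    exact smoothTransition.nonneg s
  · refine IsLocalMax.deriv_eq_zero (.of_forall fun s ↦ ?_)
    rw [smoothTransition.one_of_one_le (not_lt.1 fun h₁ ↦ ht ⟨h₀, h₁⟩)]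
    exact smoothTransition.le_one s

theorem contDiff_primitive {f : ℝ → ℝ} (hf : ContDiff ℝ ∞ f) (a : ℝ) :
    ContDiff ℝ ∞ fun x ↦ ∫ s in a..x, f s := by
  have hderiv : deriv (fun x ↦ ∫ s in a..x, f s) = f :=
    funext (hf.continuous.deriv_integral f a)
  refine contDiff_infty_iff_deriv.2 ⟨fun x ↦ ?_, hderiv.symm ▸ hf⟩
  exact (hf.continuous.integral_hasStrictDerivAt a x).hasDerivAt.differentiableAt

theorem exists_contDiff_between {E : Type*} [NormedAddCommGroup E] [NormedSpace ℝ E]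
    [FiniteDimensional ℝ E] {f g : E → ℝ} (hf : Continuous f) (hg : Continuous g)
    (hfg : ∀ x, f x < g x) :
    ∃ q : E → ℝ, ContDiff ℝ ∞ q ∧ ∀ x, q x ∈ Ioo (f x) (g x) := by
  obtain ⟨q, hq, hdist, -⟩ := ((hf.add hg).div_const 2).exists_contDiff_approx ⊤
    (ε := fun x ↦ (g x - f x) / 2) (by fun_prop) (fun x ↦ by linarith [hfg x])
  refine ⟨q, hq, fun x ↦ ?_⟩
  have h := abs_lt.1 (hdist x)
  simp only [Pi.add_apply] at h
  constructor <;> linarith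

namespace LineIsotopy

theorem exists_interpolating {P Q : ℝ → ℝ} {δ : ℝ} (hP : ContDiff ℝ ∞ P) (hQ : ContDiff ℝ ∞ Q)
    (hδ : 0 < δ) (hP' : ∀ x, δ ≤ deriv P x) (hQ' : ∀ x, δ ≤ deriv Q x) :
    ∃ g : LineIsotopy, ∀ t x,
      P (g (t, x)) = (1 - smoothTransition t) * P x + smoothTransition t * Q x := by
  let σ := smoothTransition
  have hσ : ContDiff ℝ ∞ σ := smoothTransition.contDiff
  let M (a : ℝ × ℝ) : ℝ := (1 - σ a.1) * P a.2 + σ a.1 * Q a.2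
  have hM : ContDiff ℝ ∞ M := by fun_prop
  have hM₀ x : M (0, x) = P x := by simp [M, σ]
  have hM' t x : δ ≤ deriv (fun y ↦ M (t, y)) x := by
    have hPx := (hP.differentiable (by simp) x).hasDerivAt
    have hQx := (hQ.differentiable (by simp) x).hasDerivAt
    rw [((hPx.const_mul (1 - σ t)).fun_add (hQx.const_mul (σ t))).deriv]
    exact convex_Ici δ (hP' x) (hQ' x) (sub_nonneg.2 (smoothTransition.le_one t))
      (smoothTransition.nonneg t) (sub_add_cancel _ _)
  obtain ⟨N, hN, hMN, hNM⟩ := exists_contDiff_fiberwise_inverse hM (by simp) hδ hM'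
  refine ⟨⟨fun a ↦ N (0, M a), fun a ↦ N (a.1, M (0, a.2)), by fun_prop, by fun_prop,
    fun t x ↦ ?_, fun x ↦ hNM 0 x, fun t ht x ↦ ?_⟩, fun t x ↦ ?_⟩
  · simp only [hMN, hNM]
  · have hσ' : HasDerivAt σ 0 t :=
      deriv_smoothTransition_eq_zero ht ▸ (hσ.differentiable (by simp) t).hasDerivAt
    have hMt : HasDerivAt (fun s ↦ M (s, x)) 0 t := by
      simpa using ((hσ'.const_sub 1).mul_const (P x)).fun_add (hσ'.mul_const (Q x))
    have hNM' :=
      (hasDerivAt_fderiv_prodMk_right (hN.differentiable (by simp)) 0 (M (t, x))).comp t hMt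
    exact hNM'.deriv.trans (mul_zero _)
  · rw [← hM₀, hMN]

theorem abs_im_cotangentLift_le {g : LineIsotopy} {P Q : ℝ → ℝ} {s t : ℝ} {z : ℂ}
    (hP : Differentiable ℝ P) (hQ : Differentiable ℝ Q) (hP' : 0 ≤ deriv P (g (t, z.re)))
    (hs : s ∈ Icc 0 1) (hg : ∀ x, P (g (t, x)) = (1 - s) * P x + s * Q x)
    (hzP : |z.im| ≤ deriv P z.re) (hzQ : |z.im| ≤ deriv Q z.re) :
    |(g.cotangentLift t z).im| ≤ deriv P (g (t, z.re)) := by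
  have hslope : deriv P (g (t, z.re)) * g.slope (t, z.re) =
      (1 - s) * deriv P z.re + s * deriv Q z.re := by
    have hPg := (hP _).hasDerivAt.comp z.re (g.hasDerivAt_toFun_right t z.re)
    rw [show P ∘ (fun x ↦ g (t, x)) = _ from funext hg] at hPg
    exact hPg.unique (((hP _).hasDerivAt.const_mul _).fun_add ((hQ _).hasDerivAt.const_mul _))
  rw [cotangentLift, abs_div, div_le_iff₀ (abs_pos.2 (g.slope_ne_zero t z.re))]
  calc |z.im| ≤ (1 - s) * deriv P z.re + s * deriv Q z.re :=
        (convex_Ici |z.im|) hzP hzQ (sub_nonneg.2 hs.2) hs.1 (sub_add_cancel _ _)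
    _ = deriv P (g (t, z.re)) * g.slope (t, z.re) := hslope.symm
    _ ≤ deriv P (g (t, z.re)) * |g.slope (t, z.re)| := by gcongr; exact le_abs_self _

theorem exists_squeezing {p q : ℝ → ℝ} {δ a b a' b' c : ℝ} (hp : ContDiff ℝ ∞ p)
    (hq : ContDiff ℝ ∞ q) (hδ : 0 < δ) (hpδ : ∀ x, δ ≤ p x) (hqδ : ∀ x, δ ≤ q x) (ha : a' ≤ a)
    (hb : b ≤ b') (hc : c ≤ b') (hint : ∫ x in a..b, q x < ∫ x in a'..c, p x) :
    ∃ g : LineIsotopy, (∀ t, ∀ x ∈ Icc a b, g (t, x) ∈ Icc a' b') ∧ (∀ x ∈ Icc a b, g (1, x) < c) ∧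
      ∀ t z, |z.im| ≤ p z.re → |z.im| ≤ q z.re →
        |(g.cotangentLift t z).im| ≤ p (g (t, z.re)) := by
  let P (x : ℝ) : ℝ := ∫ s in a'..x, p s
  let Q (x : ℝ) : ℝ := ∫ s in a..x, q s
  have hP : ContDiff ℝ ∞ P := contDiff_primitive hp a'
  have hQ : ContDiff ℝ ∞ Q := contDiff_primitive hq a
  have hP' : deriv P = p := funext (hp.continuous.deriv_integral p a')
  have hQ' : deriv Q = q := funext (hq.continuous.deriv_integral q a)
  have hPmono : StrictMono P := strictMono_of_deriv_pos fun x ↦ hP' ▸ hδ.trans_le (hpδ x)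
  have hQmono : StrictMono Q := strictMono_of_deriv_pos fun x ↦ hQ' ▸ hδ.trans_le (hqδ x)
  have hPa : P a' = 0 := intervalIntegral.integral_same
  have hQa : Q a = 0 := intervalIntegral.integral_same
  obtain ⟨g, hg⟩ := exists_interpolating hP hQ hδ (hP' ▸ hpδ) (hQ' ▸ hqδ)
  have hσ t : smoothTransition t ∈ Icc 0 1 := ⟨smoothTransition.nonneg t, smoothTransition.le_one t⟩
  have hQP {x : ℝ} (hx : x ≤ b) : Q x < P c := (hQmono.monotone hx).trans_lt hint
  refine ⟨g, fun t x hx ↦ ?_, fun x hx ↦ ?_, fun t z hzp hzq ↦ ?_⟩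
  · have hPx : P x ∈ Icc (P a') (P b') :=
      ⟨hPmono.monotone (ha.trans hx.1), hPmono.monotone (hx.2.trans hb)⟩
    have hQx : Q x ∈ Icc (P a') (P b') :=
      ⟨hPa.trans_le (hQa ▸ hQmono.monotone hx.1), ((hQP hx.2).trans_le (hPmono.monotone hc)).le⟩
    have hmem : P (g (t, x)) ∈ Icc (P a') (P b') := hg t x ▸
      convex_Icc _ _ hPx hQx (sub_nonneg.2 (hσ t).2) (hσ t).1 (sub_add_cancel _ _)
    exact ⟨hPmono.le_iff_le.1 hmem.1, hPmono.le_iff_le.1 hmem.2⟩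
  · refine hPmono.lt_iff_lt.1 ?_
    simpa [hg, smoothTransition.one_of_one_le] using hQP hx.2
  · have h := abs_im_cotangentLift_le (hP.differentiable (by simp)) (hQ.differentiable (by simp))
      (hP' ▸ hδ.le.trans (hpδ _)) (hσ t) (hg t) (hP' ▸ hzp) (hQ' ▸ hzq)
    rwa [hP'] at h

end LineIsotopy

theorem exists_isHamiltonianIn_of_eqOn_ball {H : ℝ × ℂ → ℝ} {r ρ : ℝ} (hH : ContDiff ℝ ∞ H)
    (hH₀ : ∀ t ∉ Ioo (0 : ℝ) 1, ∀ z, H (t, z) = 0) (hr : 0 < r) (hrρ : r < ρ) :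
    ∃ F, IsHamiltonianIn ρ F ∧
      ∀ t, EqOn (hamiltonianVectorField F t) (hamiltonianVectorField H t) (ball 0 r) := by
  let χ : ContDiffBump (0 : ℂ) := ⟨r, (r + ρ) / 2, hr, by linarith⟩
  have hχ : ContDiff ℝ ∞ χ := χ.contDiff
  refine ⟨fun a ↦ χ a.2 * H a, ⟨by fun_prop, (r + ρ) / 2, by linarith, ?_⟩, fun t z hz ↦ ?_⟩
  · rintro ⟨t, z⟩ ha
    exact ⟨by_contra fun ht ↦ right_ne_zero_of_mul ha (hH₀ t ht z),
      χ.support_eq.subset (left_ne_zero_of_mul ha)⟩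
  · have h : (fun w ↦ χ w * H (t, w)) =ᶠ[𝓝 z] fun w ↦ H (t, w) := by
      filter_upwards [isOpen_ball.mem_nhds hz] with w hw
      rw [χ.one_of_mem_closedBall (ball_subset_closedBall hw), one_mul]
    simp only [hamiltonianVectorField, h.gradient_eq]

section Discs

/-- The area of the part of the upper half-disc `‖z‖ ≤ R`, `0 ≤ im z` where `re z ≤ c`. -/
noncomputable def halfDiscArea (R c : ℝ) : ℝ := ∫ x in -R..c, √(R ^ 2 - x ^ 2)

theorem halfDiscArea_self {R : ℝ} (hR : 0 ≤ R) : halfDiscArea R R = π * R ^ 2 / 2 := by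
  have hscale x : √(R ^ 2 - (R * x) ^ 2) = R * √(1 - x ^ 2) := by
    rw [show R ^ 2 - (R * x) ^ 2 = R ^ 2 * (1 - x ^ 2) by ring, sqrt_mul (sq_nonneg R),
      sqrt_sq hR]
  have h := intervalIntegral.mul_integral_comp_mul_left (a := -1) (b := 1)
    (f := fun x ↦ √(R ^ 2 - x ^ 2)) R
  simp only [hscale, intervalIntegral.integral_const_mul, integral_sqrt_one_sub_sq, mul_neg,
    mul_one] at h
  rw [halfDiscArea, ← h]
  ring

theorem halfDiscArea_add_halfDiscArea_neg (R c : ℝ) :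
    halfDiscArea R c + halfDiscArea R (-c) = halfDiscArea R R := by
  have hint a b : IntervalIntegrable (fun x ↦ √(R ^ 2 - x ^ 2)) MeasureTheory.volume a b :=
    Continuous.intervalIntegrable (by fun_prop) a b
  have hneg := intervalIntegral.integral_comp_neg (a := c) (b := R) fun x ↦ √(R ^ 2 - x ^ 2)
  simp only [neg_sq] at hneg
  rw [halfDiscArea, halfDiscArea, ← hneg]
  exact intervalIntegral.integral_add_adjacent_intervals (hint _ _) (hint _ _)

theorem exists_halfDiscArea_eq {R T : ℝ} (hR : 0 ≤ R) (hT : T ∈ Icc 0 (π * R ^ 2 / 2)) :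
    ∃ c ∈ Icc (-R) R, halfDiscArea R c = T := by
  have hcont : Continuous (halfDiscArea R) := intervalIntegral.continuous_primitive
    (fun a b ↦ Continuous.intervalIntegrable (by fun_prop) a b) _
  refine intermediate_value_Icc (neg_le_self hR) hcont.continuousOn ?_
  rwa [halfDiscArea_self hR, halfDiscArea, intervalIntegral.integral_same]

theorem norm_lt_add_of_abs_im_lt {z : ℂ} {R d : ℝ} (hd : 0 ≤ d) (hre : |z.re| ≤ R)
    (him : |z.im| < √(R ^ 2 - z.re ^ 2) + d) : ‖z‖ < R + d := by
  have hR : 0 ≤ R := (abs_nonneg _).trans hre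
  have hs : √(R ^ 2 - z.re ^ 2) ≤ R := sqrt_le_iff.2 ⟨hR, sub_le_self _ (sq_nonneg _)⟩
  have hs' : √(R ^ 2 - z.re ^ 2) ^ 2 = R ^ 2 - z.re ^ 2 :=
    sq_sqrt (sub_nonneg.2 (sq_le_sq' (neg_le_of_abs_le hre) (le_of_abs_le hre)))
  refine lt_of_pow_lt_pow_left₀ 2 (by positivity) ?_
  calc ‖z‖ ^ 2 = z.re ^ 2 + |z.im| ^ 2 := by
        rw [← Complex.normSq_eq_norm_sq, Complex.normSq_apply, sq_abs]; ring
    _ < z.re ^ 2 + (√(R ^ 2 - z.re ^ 2) + d) ^ 2 := by gcongr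
    _ ≤ (R + d) ^ 2 := by nlinarith

theorem abs_im_le_sqrt_of_norm_le {z : ℂ} {r : ℝ} (hz : ‖z‖ ≤ r) :
    |z.im| ≤ √(r ^ 2 - z.re ^ 2) := by
  have h := pow_le_pow_left₀ (norm_nonneg z) hz 2
  rw [← Complex.normSq_eq_norm_sq, Complex.normSq_apply] at h
  exact abs_le_sqrt (by linarith)

theorem exists_contDiff_halfDisc_profiles {r R c d : ℝ} (hr : 0 ≤ r) (hc : -R ≤ c) (hd : 0 < d)
    (h : π * r ^ 2 / 2 < halfDiscArea R c) :
    ∃ (p q : ℝ → ℝ) (δ : ℝ), ContDiff ℝ ∞ p ∧ ContDiff ℝ ∞ q ∧ 0 < δ ∧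
      (∀ x, p x ∈ Ioo (√(R ^ 2 - x ^ 2) + δ) (√(R ^ 2 - x ^ 2) + d)) ∧
      (∀ x, √(r ^ 2 - x ^ 2) + δ < q x) ∧ ∫ x in -r..r, q x < ∫ x in -R..c, p x := by
  obtain ⟨δ, hδ, hδd, hint⟩ :
      ∃ δ > 0, 2 * δ < d ∧ π * r ^ 2 / 2 + 2 * δ * (2 * r) < halfDiscArea R c := by
    have hcont : Continuous fun δ ↦ π * r ^ 2 / 2 + 2 * δ * (2 * r) := by fun_prop
    have hint : ∀ᶠ δ in 𝓝 (0 : ℝ), π * r ^ 2 / 2 + 2 * δ * (2 * r) < halfDiscArea R c :=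
      (hcont.tendsto 0).eventually_lt_const (by simpa using h)
    have hsmall : ∀ᶠ δ in 𝓝[>] (0 : ℝ), δ ∈ Ioo 0 (d / 2) := Ioo_mem_nhdsGT (half_pos hd)
    obtain ⟨δ, ⟨hδ, hδd⟩, hδint⟩ := (hsmall.and (hint.filter_mono nhdsWithin_le_nhds)).exists
    exact ⟨δ, hδ, by linarith, hδint⟩
  have profile (s : ℝ) : ∃ p : ℝ → ℝ, ContDiff ℝ ∞ p ∧
      ∀ x, p x ∈ Ioo (√(s ^ 2 - x ^ 2) + δ) (√(s ^ 2 - x ^ 2) + 2 * δ) :=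
    exists_contDiff_between (by fun_prop) (by fun_prop) fun x ↦ by linarith
  obtain ⟨p, hp, hpI⟩ := profile R
  obtain ⟨q, hq, hqI⟩ := profile r
  refine ⟨p, q, δ, hp, hq, hδ, fun x ↦ ⟨(hpI x).1, by linarith [(hpI x).2]⟩,
    fun x ↦ (hqI x).1, ?_⟩
  have hsqrt (s : ℝ) : Continuous fun x ↦ √(s ^ 2 - x ^ 2) := by fun_prop
  calc ∫ x in -r..r, q x
      ≤ ∫ x in -r..r, (√(r ^ 2 - x ^ 2) + 2 * δ) :=
        intervalIntegral.integral_mono (neg_le_self hr) (hq.continuous.intervalIntegrable _ _)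
          (((hsqrt r).add continuous_const).intervalIntegrable _ _) fun x ↦ (hqI x).2.le
    _ = halfDiscArea r r + 2 * δ * (2 * r) := by
        rw [intervalIntegral.integral_add ((hsqrt r).intervalIntegrable _ _)
          intervalIntegrable_const, intervalIntegral.integral_const, halfDiscArea, smul_eq_mul]
        ring
    _ < halfDiscArea R c := by rwa [halfDiscArea_self hr]
    _ ≤ ∫ x in -R..c, p x :=
        intervalIntegral.integral_mono hc ((hsqrt R).intervalIntegrable _ _)
          (hp.continuous.intervalIntegrable _ _) fun x ↦ by linarith [(hpI x).1]

theorem exists_lineIsotopy_cotangentLift_re_lt {r R c d : ℝ} (hr : 0 ≤ r) (hrR : r ≤ R)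
    (hc : c ∈ Icc (-R) R) (hd : 0 < d) (h : π * r ^ 2 / 2 < halfDiscArea R c) :
    ∃ g : LineIsotopy, ∀ z, ‖z‖ ≤ r →
      (g.cotangentLift 1 z).re < c ∧ ∀ t, ‖g.cotangentLift t z‖ < R + d := by
  obtain ⟨p, q, δ, hp, hq, hδ, hpI, hqI, hqp⟩ := exists_contDiff_halfDisc_profiles hr hc.1 hd h
  obtain ⟨g, hmaps, hlt, him⟩ := LineIsotopy.exists_squeezing hp hq hδ
    (fun x ↦ by linarith [(hpI x).1, sqrt_nonneg (R ^ 2 - x ^ 2)])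
    (fun x ↦ by linarith [hqI x, sqrt_nonneg (r ^ 2 - x ^ 2)])
    (neg_le_neg hrR) hrR hc.2 hqp
  refine ⟨g, fun z hz ↦ ?_⟩
  have hre : z.re ∈ Icc (-r) r := abs_le.1 ((Complex.abs_re_le_norm z).trans hz)
  refine ⟨hlt _ hre, fun t ↦ ?_⟩
  have hzp : |z.im| ≤ p z.re := by
    linarith [(hpI z.re).1, abs_im_le_sqrt_of_norm_le (hz.trans hrR)]
  have hzq : |z.im| ≤ q z.re := by linarith [hqI z.re, abs_im_le_sqrt_of_norm_le hz]
  exact norm_lt_add_of_abs_im_lt hd.le (abs_le.2 (hmaps t _ hre))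
    ((him t z hzp hzq).trans_lt (hpI _).2)

theorem exists_isHamiltonianIn_transports_re_lt {r R ρ c : ℝ} (hr : 0 ≤ r) (hrR : r < R)
    (hRρ : R < ρ) (hc : c ∈ Icc (-R) R) (h : π * r ^ 2 / 2 < halfDiscArea R c) :
    ∃ H, IsHamiltonianIn ρ H ∧
      ∀ z, ‖z‖ ≤ r → ∃ w, w.re < c ∧ Transports (hamiltonianVectorField H) z w := by
  obtain ⟨g, hg⟩ := exists_lineIsotopy_cotangentLift_re_lt hr hrR.le hc
    (half_pos (sub_pos.2 hRρ)) h
  obtain ⟨H, hH, hHg⟩ := exists_isHamiltonianIn_of_eqOn_ball g.contDiff_hamiltonian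
    (fun t ht ↦ g.hamiltonian_eq_zero ht)
    (show 0 < R + (ρ - R) / 2 by linarith) (show R + (ρ - R) / 2 < ρ by linarith)
  refine ⟨H, hH, fun z hz ↦ ⟨_, (hg z hz).1, ?_⟩⟩
  have hcurve : IsIntegralCurve (g.cotangentLift · z) (hamiltonianVectorField H) := fun t ↦ by
    rw [hHg t (mem_ball_zero_iff.2 ((hg z hz).2 t))]
    exact g.isIntegralCurve_cotangentLift z t
  simpa only [g.cotangentLift_zero] using Transports.of_isIntegralCurve hcurve

theorem exists_halfDisc_cut {r s R : ℝ} (hR : 0 ≤ R) (h : r ^ 2 + s ^ 2 < R ^ 2) :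
    ∃ c, c ∈ Icc (-R) R ∧ π * r ^ 2 / 2 < halfDiscArea R c ∧
      π * s ^ 2 / 2 < halfDiscArea R (-c) := by
  have hgap : π * r ^ 2 / 2 + π * s ^ 2 / 2 < π * R ^ 2 / 2 := by
    nlinarith [mul_lt_mul_of_pos_left h pi_pos]
  have hr : 0 ≤ π * r ^ 2 / 2 := by positivity
  have hs : 0 ≤ π * s ^ 2 / 2 := by positivity
  obtain ⟨c, hc, hcT⟩ := exists_halfDiscArea_eq hR
    (T := (π * r ^ 2 / 2 + (π * R ^ 2 / 2 - π * s ^ 2 / 2)) / 2) ⟨by linarith, by linarith⟩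
  have hsum := halfDiscArea_add_halfDiscArea_neg R c
  rw [halfDiscArea_self hR] at hsum
  exact ⟨c, hc, by linarith, by linarith⟩

theorem exists_isHamiltonianIn_transports_lt_norm {r s ρ : ℝ} (hr : 0 ≤ r) (hs : 0 ≤ s)
    (hρ : 0 ≤ ρ) (h : r ^ 2 + s ^ 2 < ρ ^ 2) :
    ∃ F, IsHamiltonianIn ρ F ∧
      ∀ z w, ‖z‖ ≤ r → Transports (hamiltonianVectorField F) z w → s < ‖w‖ := by
  obtain ⟨R, hR, hR₁, hR₂⟩ : ∃ R : ℝ, 0 ≤ R ∧ r ^ 2 + s ^ 2 < R ^ 2 ∧ R ^ 2 < ρ ^ 2 := by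
    obtain ⟨M, hM₁, hM₂⟩ := exists_between h
    have hM : 0 ≤ M := by nlinarith
    exact ⟨√M, sqrt_nonneg M, by rwa [sq_sqrt hM], by rwa [sq_sqrt hM]⟩
  have hrR : r < R := lt_of_pow_lt_pow_left₀ 2 hR (by nlinarith)
  have hsR : s < R := lt_of_pow_lt_pow_left₀ 2 hR (by nlinarith)
  have hRρ : R < ρ := lt_of_pow_lt_pow_left₀ 2 hρ hR₂
  obtain ⟨c, hc, hcr, hcs⟩ := exists_halfDisc_cut hR hR₁
  obtain ⟨G, hG, hGlt⟩ := exists_isHamiltonianIn_transports_re_lt hr hrR hRρ hc hcr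
  obtain ⟨H, hH, hHlt⟩ := exists_isHamiltonianIn_transports_re_lt hs hsR hRρ
    ⟨neg_le_neg hc.2, neg_le.2 hc.1⟩ hcs
  have hH' := hH.reflect.reverse
  refine ⟨_, hG.concat hH', fun z w hz hzw ↦ ?_⟩
  by_contra! hw
  obtain ⟨x, hxc, hzx⟩ := hGlt z hz
  obtain ⟨y, hyc, hwy⟩ := hHlt (-w) (by rwa [norm_neg])
  have hyw : Transports (hamiltonianVectorField (reverseHamiltonian (reflectHamiltonian H)))
      (-y) w := by
    rw [hamiltonianVectorField_reverseHamiltonian, hamiltonianVectorField_reflectHamiltonian]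
    simpa only [neg_neg] using hwy.reflect.reverse
  obtain ⟨K, hK⟩ := hH'.exists_lipschitzWith_field
  have hxy : x = -y := (hG.transports_of_transports_concat hH' hzx hzw).left_unique hK hyw
  rw [hxy, Complex.neg_re] at hxc
  linarith

theorem exists_isHamiltonianIn_flow_mem_annulus {r s ρ : ℝ} (hr : 0 ≤ r) (hs : 0 ≤ s)
    (hρ : 0 ≤ ρ) (h : r ^ 2 + s ^ 2 < ρ ^ 2) :
    ∃ (F : ℝ × ℂ → ℝ) (b : ℝ → ℂ → ℂ), IsHamiltonianIn ρ F ∧ b 0 = id ∧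
      (∀ z, IsIntegralCurve (b · z) (hamiltonianVectorField F)) ∧
      ∀ z, ‖z‖ ≤ r → s < ‖b 1 z‖ ∧ ‖b 1 z‖ < ρ := by
  obtain ⟨F, hF, hFs⟩ := exists_isHamiltonianIn_transports_lt_norm hr hs hρ h
  obtain ⟨b, hb₀, hb⟩ := hF.exists_flow
  have hzb (z : ℂ) : Transports (hamiltonianVectorField F) z (b 1 z) := by
    simpa [hb₀] using Transports.of_isIntegralCurve (hb z)
  have hrρ : r < ρ := lt_of_pow_lt_pow_left₀ 2 hρ (by nlinarith)
  exact ⟨F, b, hF, hb₀, hb, fun z hz ↦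
    ⟨hFs z _ hz (hzb z), hF.norm_lt_of_transports (hz.trans_lt hrρ) (hzb z)⟩⟩

end Discs

theorem stmt_4_general (a A B : ℝ) (ha : 0 ≤ a) (hA : 0 ≤ A) (hB : a + A < B) :
    ∃ (F : ℝ × ℂ → ℝ) (b : ℝ → ℂ → ℂ),
      ContDiff ℝ (⊤ : ℕ∞) F ∧
      (∀ (t : ℝ) (z : ℂ), B ≤ π * ‖z‖ ^ 2 → F (t, z) = 0) ∧
      b 0 = id ∧
      (∀ (z : ℂ) (t : ℝ),
        HasDerivAt (fun s => b s z) (Complex.I * gradient (fun w => F (t, w)) (b t z)) t) ∧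
      b 1 '' {z : ℂ | π * ‖z‖ ^ 2 ≤ a} ⊆
        {z : ℂ | A < π * ‖z‖ ^ 2 ∧ π * ‖z‖ ^ 2 < B} := by
  have hsq {x : ℝ} (hx : 0 ≤ x) : √(x / π) ^ 2 = x / π := sq_sqrt (by positivity)
  have hB₀ : 0 ≤ B := by linarith
  obtain ⟨F, b, hF, hb₀, hb, hbs⟩ := exists_isHamiltonianIn_flow_mem_annulus
    (sqrt_nonneg (a / π)) (sqrt_nonneg (A / π)) (sqrt_nonneg (B / π))
    (by rw [hsq ha, hsq hA, hsq hB₀, ← add_div]; gcongr)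
  refine ⟨F, b, hF.contDiff, fun t z hz ↦ hF.apply_eq_zero ?_, hb₀, hb, ?_⟩
  · rwa [sqrt_le_left (norm_nonneg z), div_le_iff₀' pi_pos]
  · rintro _ ⟨z, hz, rfl⟩
    obtain ⟨hlt, hgt⟩ := hbs z (le_sqrt_of_sq_le ((le_div_iff₀' pi_pos).2 hz))
    rw [sqrt_lt' ((sqrt_nonneg _).trans_lt hlt), div_lt_iff₀' pi_pos] at hlt
    rw [lt_sqrt (norm_nonneg _), lt_div_iff₀' pi_pos] at hgt
    exact ⟨hlt, hgt⟩

/-- Lemma about disjoining discs, one-parameter version: for `A ≥ 0` and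
`0 < ε < 1` there are a smooth time-dependent Hamiltonian `F : ℝ × ℂ → ℝ` vanishing on
`{π|z|² ≥ 1 + A + ε}` and a Hamiltonian flow `b` of `F` whose time-one map carries the closed
disc `{π|z|² ≤ 1}` into the open annulus `{A < π|z|² < 1 + A + ε}`. -/
theorem stmt_4 (A ε : ℝ) (hA : 0 ≤ A) (hε0 : 0 < ε) (hε1 : ε < 1) :
    ∃ (F : ℝ × ℂ → ℝ) (b : ℝ → ℂ → ℂ),
      ContDiff ℝ (⊤ : ℕ∞) F ∧
      (∀ (t : ℝ) (z : ℂ), 1 + A + ε ≤ π * ‖z‖ ^ 2 → F (t, z) = 0) ∧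
      b 0 = id ∧
      (∀ (z : ℂ) (t : ℝ),
        HasDerivAt (fun s => b s z) (Complex.I * gradient (fun w => F (t, w)) (b t z)) t) ∧
      b 1 '' {z : ℂ | π * ‖z‖ ^ 2 ≤ 1} ⊆
        {z : ℂ | A < π * ‖z‖ ^ 2 ∧ π * ‖z‖ ^ 2 < 1 + A + ε} := by
  exact stmt_4_general 1 A (1 + A + ε) zero_le_one hA (by linarith)
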